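/- arXiv:1804.00295 — 2 statements merged into one kernel-verified Lean document; each statement's English description precedes it below -/
import Mathlib

section
/- Fix α ∈ ℝ and real numbers δ₁, δ₂, δ₃ ≥ 0 with δ₁ ≤ 1/2 and δ₂² + δ₃² < 1/2. Let N(λ) be the real symmetric 3×3 matrix with diagonal entries λ−ζ₁, λ−ζ₂, λ−ζ₃, and off-diagonal entries N₂₃ = N₃₂ = −δ₁√(λ²+λζ₁+ζ₁²), N₁₃ = N₃₁ = −δ₂√(λ²+λζ₂+ζ₂²), N₁₂ = N₂₁ = −δ₃√(λ²+λζ₃+ζ₃²), so that det N(λ) = (λ−ζ₁)(λ−ζ₂)(λ−ζ₃) − Σ_{j=1}^{3}(λ³−ζ_j³)δ_j² − 2δ₁δ₂δ₃√((λ²+λζ₁+ζ₁²)(λ²+λζ₂+ζ₂²)(λ²+λζ₃+ζ₃²)). Then the equation det N(λ) = 0 has a largest real root Λ', this Λ' satisfies Λ' ≥ max{ζ₁, ζ₂, ζ₃}, and N(λ) is positive definite for every λ > Λ'. -/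
/-!
At the largest `M` of the `ζⱼ` the product term of the determinant vanishes and the remaining
terms are nonpositive, so `det N(M) ≤ 0`. As `λ → ∞` the determinant is of order
`(1 - δ₁² - δ₂² - δ₃² - 2δ₁δ₂δ₃) λ³`, and the hypotheses on the `δⱼ` make this coefficient
positive (`coeff_lt_one`, `poly_pos`). By the intermediate value theorem the closed, bounded above
set of roots contains a point `≥ M`, hence has a greatest element `Λ' ≥ M`, beyond which the
determinant is positive.

For `λ > Λ'` positive definiteness follows at once: the diagonal entries are positive and the
off-diagonal entries are nonpositive, so in the expansion of the determinant every term but the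
one containing a given principal `2 × 2` minor is nonpositive; a positive determinant therefore
forces that minor to be positive, and completing squares finishes the proof (`posDef_of_det_pos`).
-/

noncomputable section

/-- For this sign pattern the leading minors need no separate hypothesis: `c (ab - d²)` is the
determinant plus nonnegative terms, so it is positive when the determinant is. -/
lemma posDef_of_det_pos {a b c d e f : ℝ} (ha : 0 < a) (hb : 0 < b) (hc : 0 < c)
    (hd : 0 ≤ d) (he : 0 ≤ e) (hf : 0 ≤ f)
    (hdet : 0 < (!![a, -d, -e; -d, b, -f; -e, -f, c] : Matrix (Fin 3) (Fin 3) ℝ).det) :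
    (!![a, -d, -e; -d, b, -f; -e, -f, c] : Matrix (Fin 3) (Fin 3) ℝ).PosDef := by
  simp only [Matrix.det_fin_three, Matrix.of_apply, Matrix.cons_val', Matrix.cons_val_zero,
    Matrix.cons_val_one, Matrix.cons_val] at hdet
  have hm : 0 < a * b - d ^ 2 := by
    have h1 : 0 ≤ a * f ^ 2 := by positivity
    have h2 : 0 ≤ b * e ^ 2 := by positivity
    have h3 : 0 ≤ d * e * f := by positivity
    have h4 : 0 < c * (a * b - d ^ 2) := by nlinarith
    exact pos_of_mul_pos_right h4 hc.le
  refine Matrix.PosDef.of_dotProduct_mulVec_pos ?_ ?_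
  · ext i j
    fin_cases i <;> fin_cases j <;> simp
  · intro x hx
    set D := a * b * c - a * f ^ 2 - b * e ^ 2 - c * d ^ 2 - 2 * d * e * f with hD
    have hDpos : 0 < D := by rw [hD]; nlinarith
    set m := a * b - d ^ 2 with hmdef
    have hQ : star x ⬝ᵥ (!![a, -d, -e; -d, b, -f; -e, -f, c] : Matrix (Fin 3) (Fin 3) ℝ).mulVec x
        = a * x 0 ^ 2 + b * x 1 ^ 2 + c * x 2 ^ 2
          - 2 * d * x 0 * x 1 - 2 * e * x 0 * x 2 - 2 * f * x 1 * x 2 := by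
      simp [dotProduct, Matrix.mulVec, Fin.sum_univ_three]
      ring
    rw [hQ]
    set Q := a * x 0 ^ 2 + b * x 1 ^ 2 + c * x 2 ^ 2
          - 2 * d * x 0 * x 1 - 2 * e * x 0 * x 2 - 2 * f * x 1 * x 2 with hQdef
    -- Two-step completion of squares, scaled by the leading minors `a` and `m` to avoid division.
    have key : a * m * Q = m * (a * x 0 - d * x 1 - e * x 2) ^ 2
        + (m * x 1 - (a * f + d * e) * x 2) ^ 2 + a * D * x 2 ^ 2 := by
      rw [hQdef, hmdef, hD]; ring
    have ham : 0 < a * m := mul_pos ha hm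
    have t1 : 0 ≤ m * (a * x 0 - d * x 1 - e * x 2) ^ 2 := by positivity
    have t2 : 0 ≤ (m * x 1 - (a * f + d * e) * x 2) ^ 2 := by positivity
    have t3 : 0 ≤ a * D * x 2 ^ 2 := by positivity
    by_contra hneg
    have hle : a * m * Q ≤ 0 := mul_nonpos_of_nonneg_of_nonpos ham.le (not_lt.mp hneg)
    have e3 : a * D * x 2 ^ 2 = 0 := by linarith
    have x2 : x 2 = 0 := by
      rcases mul_eq_zero.mp e3 with h | h
      · exact absurd h (mul_pos ha hDpos).ne'
      · exact pow_eq_zero_iff (two_ne_zero) |>.mp h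
    have e2 : (m * x 1 - (a * f + d * e) * x 2) ^ 2 = 0 := by linarith
    have x1 : x 1 = 0 := by
      have h := pow_eq_zero_iff (two_ne_zero) |>.mp e2
      rw [x2, mul_zero, sub_zero] at h
      exact (mul_eq_zero.mp h).resolve_left hm.ne'
    have e1 : m * (a * x 0 - d * x 1 - e * x 2) ^ 2 = 0 := by linarith
    have x0 : x 0 = 0 := by
      have h := pow_eq_zero_iff (two_ne_zero) |>.mp ((mul_eq_zero.mp e1).resolve_left hm.ne')
      rw [x2, x1, mul_zero, mul_zero, sub_zero, sub_zero] at h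
      exact (mul_eq_zero.mp h).resolve_left ha.ne'
    apply hx
    ext i
    fin_cases i <;> simp [x0, x1, x2]

/-- Follows from `2δ₂δ₃ ≤ δ₂² + δ₃²`. -/
lemma coeff_lt_one {δ₁ δ₂ δ₃ : ℝ} (h₁ : 0 ≤ δ₁) (h₂ : 0 ≤ δ₂) (h₃ : 0 ≤ δ₃)
    (hδ₁ : δ₁ ≤ 1 / 2) (hδ : δ₂ ^ 2 + δ₃ ^ 2 < 1 / 2) :
    δ₁ ^ 2 + δ₂ ^ 2 + δ₃ ^ 2 + 2 * δ₁ * δ₂ * δ₃ < 1 := by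
  have a1 : δ₁ ^ 2 ≤ 1 / 4 := by nlinarith
  have a2 : 2 * δ₁ * δ₂ * δ₃ ≤ δ₂ * δ₃ := by
    nlinarith [mul_nonneg h₂ h₃]
  nlinarith [sq_nonneg (δ₂ - δ₃)]

/-- For `|ζⱼ| ≤ 1` and `k = δ₁² + δ₂² + δ₃² + 2δ₁δ₂δ₃`, this polynomial is a lower bound for
`det N(x)` when `x ≥ 1`. The threshold makes `(1 - k) x³ ≥ 8x²`, which dominates the negative terms
`-3(1 + k) x² - (1 + k)`. -/
lemma poly_pos {k x : ℝ} (hk0 : 0 ≤ k) (hk : k < 1) (hx : 8 / (1 - k) ≤ x) :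
    0 < (x - 1) ^ 3 - k * (x + 1) ^ 3 := by
  have hk' : 0 < 1 - k := by linarith
  have h8 : 8 ≤ x * (1 - k) := (div_le_iff₀ hk').mp hx
  have hx0 : 0 < x := lt_of_lt_of_le (by positivity) hx
  have hx8 : 8 ≤ x := by nlinarith
  have h1 : 8 * x ^ 2 ≤ x * (1 - k) * x ^ 2 := by gcongr
  have h2 : 0 ≤ (1 - k) * x ^ 2 := by positivity
  nlinarith

/-- The quadratic forms under the square roots are nonnegative. -/
lemma quad_nonneg (x z : ℝ) : 0 ≤ x ^ 2 + x * z + z ^ 2 := by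
  nlinarith [sq_nonneg (x + z), sq_nonneg x, sq_nonneg z]

lemma sqrt_quad_le {x z : ℝ} (hx : 0 ≤ x) (h1 : -1 ≤ z) (h2 : z ≤ 1) :
    Real.sqrt (x ^ 2 + x * z + z ^ 2) ≤ x + 1 := by
  apply Real.sqrt_le_iff.mpr
  constructor
  · linarith
  · nlinarith

/-- For `α ∈ ℝ`, `ζ₁ = cos α`, `ζ₂ = cos(α + 2π/3)`, `ζ₃ = cos(α − 2π/3)`,
and `0 ≤ δ₁, δ₂, δ₃` with `δ₁ ≤ 1/2`, `δ₂² + δ₃² < 1/2`, the symmetric matrix `N(λ)` has the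
stated determinant, the equation `det N(λ) = 0` has a largest real root `Λ'`, this `Λ'`
satisfies `Λ' ≥ max{ζ₁, ζ₂, ζ₃}`, and `N(λ)` is positive definite for every `λ > Λ'`. -/
theorem matrixN_largest_root_posDef
    (α : ℝ) (ζ₁ ζ₂ ζ₃ : ℝ)
    (hζ₁ : ζ₁ = Real.cos α) (hζ₂ : ζ₂ = Real.cos (α + 2 * Real.pi / 3))
    (hζ₃ : ζ₃ = Real.cos (α - 2 * Real.pi / 3))
    (δ₁ δ₂ δ₃ : ℝ) (h₁ : 0 ≤ δ₁) (h₂ : 0 ≤ δ₂) (h₃ : 0 ≤ δ₃)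
    (hδ₁ : δ₁ ≤ 1 / 2) (hδ : δ₂ ^ 2 + δ₃ ^ 2 < 1 / 2)
    (N : ℝ → Matrix (Fin 3) (Fin 3) ℝ)
    (hN : ∀ lam : ℝ, N lam =
      !![lam - ζ₁, -(δ₃ * Real.sqrt (lam ^ 2 + lam * ζ₃ + ζ₃ ^ 2)),
          -(δ₂ * Real.sqrt (lam ^ 2 + lam * ζ₂ + ζ₂ ^ 2));
        -(δ₃ * Real.sqrt (lam ^ 2 + lam * ζ₃ + ζ₃ ^ 2)), lam - ζ₂,
          -(δ₁ * Real.sqrt (lam ^ 2 + lam * ζ₁ + ζ₁ ^ 2));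
        -(δ₂ * Real.sqrt (lam ^ 2 + lam * ζ₂ + ζ₂ ^ 2)),
          -(δ₁ * Real.sqrt (lam ^ 2 + lam * ζ₁ + ζ₁ ^ 2)), lam - ζ₃]) :
    (∀ lam : ℝ, (N lam).det =
      (lam - ζ₁) * (lam - ζ₂) * (lam - ζ₃) -
        ((lam ^ 3 - ζ₁ ^ 3) * δ₁ ^ 2 + (lam ^ 3 - ζ₂ ^ 3) * δ₂ ^ 2 +
          (lam ^ 3 - ζ₃ ^ 3) * δ₃ ^ 2) -
        2 * δ₁ * δ₂ * δ₃ * Real.sqrt ((lam ^ 2 + lam * ζ₁ + ζ₁ ^ 2) *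
          ((lam ^ 2 + lam * ζ₂ + ζ₂ ^ 2) * (lam ^ 2 + lam * ζ₃ + ζ₃ ^ 2)))) ∧
    ∃ Λ' : ℝ, IsGreatest {lam : ℝ | (N lam).det = 0} Λ' ∧
      max ζ₁ (max ζ₂ ζ₃) ≤ Λ' ∧ ∀ lam : ℝ, Λ' < lam → (N lam).PosDef := by
  have q₁ := fun l : ℝ => Real.sq_sqrt (quad_nonneg l ζ₁)
  have q₂ := fun l : ℝ => Real.sq_sqrt (quad_nonneg l ζ₂)
  have q₃ := fun l : ℝ => Real.sq_sqrt (quad_nonneg l ζ₃)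
  -- The determinant with the square roots of the three quadratics kept apart.
  have hdet : ∀ l : ℝ, (N l).det = (l - ζ₁) * (l - ζ₂) * (l - ζ₃) -
        ((l ^ 3 - ζ₁ ^ 3) * δ₁ ^ 2 + (l ^ 3 - ζ₂ ^ 3) * δ₂ ^ 2 +
          (l ^ 3 - ζ₃ ^ 3) * δ₃ ^ 2) -
        2 * δ₁ * δ₂ * δ₃ * (Real.sqrt (l ^ 2 + l * ζ₁ + ζ₁ ^ 2) *
          (Real.sqrt (l ^ 2 + l * ζ₂ + ζ₂ ^ 2) * Real.sqrt (l ^ 2 + l * ζ₃ + ζ₃ ^ 2))) := by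
    intro l
    rw [hN, Matrix.det_fin_three]
    simp only [Matrix.of_apply, Matrix.cons_val', Matrix.cons_val_zero,
      Matrix.cons_val_one, Matrix.cons_val]
    linear_combination -(l - ζ₁) * δ₁ ^ 2 * q₁ l - (l - ζ₂) * δ₂ ^ 2 * q₂ l
      - (l - ζ₃) * δ₃ ^ 2 * q₃ l
  refine ⟨fun l => ?_, ?_⟩
  · rw [hdet, Real.sqrt_mul (quad_nonneg l ζ₁), Real.sqrt_mul (quad_nonneg l ζ₂)]
  have hcont : Continuous fun l => (N l).det := by
    simp only [hdet]
    fun_prop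
  have b₁ : -1 ≤ ζ₁ ∧ ζ₁ ≤ 1 := hζ₁ ▸ ⟨Real.neg_one_le_cos _, Real.cos_le_one _⟩
  have b₂ : -1 ≤ ζ₂ ∧ ζ₂ ≤ 1 := hζ₂ ▸ ⟨Real.neg_one_le_cos _, Real.cos_le_one _⟩
  have b₃ : -1 ≤ ζ₃ ∧ ζ₃ ≤ 1 := hζ₃ ▸ ⟨Real.neg_one_le_cos _, Real.cos_le_one _⟩
  set M := max ζ₁ (max ζ₂ ζ₃) with hM
  have m₁ : ζ₁ ≤ M := le_max_left _ _
  have m₂ : ζ₂ ≤ M := (le_max_left _ _).trans (le_max_right _ _)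
  have m₃ : ζ₃ ≤ M := (le_max_right _ _).trans (le_max_right _ _)
  have hM0 : (N M).det ≤ 0 := by
    have hz : (M - ζ₁) * (M - ζ₂) * (M - ζ₃) = 0 := by
      rcases max_choice ζ₁ (max ζ₂ ζ₃) with h | h
      · rw [hM, h]; ring
      · rcases max_choice ζ₂ ζ₃ with h' | h' <;> rw [hM, h, h'] <;> ring
    have hcube : ∀ z, z ≤ M → 0 ≤ M ^ 3 - z ^ 3 := by
      intro z hz
      have := mul_nonneg (sub_nonneg.mpr hz) (quad_nonneg M z)
      linarith [show (M - z) * (M ^ 2 + M * z + z ^ 2) = M ^ 3 - z ^ 3 by ring]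
    rw [hdet, hz]
    have c₁ := mul_nonneg (hcube _ m₁) (sq_nonneg δ₁)
    have c₂ := mul_nonneg (hcube _ m₂) (sq_nonneg δ₂)
    have c₃ := mul_nonneg (hcube _ m₃) (sq_nonneg δ₃)
    have : 0 ≤ 2 * δ₁ * δ₂ * δ₃ * (Real.sqrt (M ^ 2 + M * ζ₁ + ζ₁ ^ 2) *
          (Real.sqrt (M ^ 2 + M * ζ₂ + ζ₂ ^ 2) * Real.sqrt (M ^ 2 + M * ζ₃ + ζ₃ ^ 2))) := by
      positivity
    linarith
  obtain ⟨k, hk⟩ : ∃ k, k = δ₁ ^ 2 + δ₂ ^ 2 + δ₃ ^ 2 + 2 * δ₁ * δ₂ * δ₃ := ⟨_, rfl⟩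
  have hk0 : 0 ≤ k := by rw [hk]; positivity
  have hk1 : k < 1 := hk ▸ coeff_lt_one h₁ h₂ h₃ hδ₁ hδ
  set B := 8 / (1 - k) with hB
  have hB1 : 1 ≤ B := by
    rw [hB, le_div_iff₀ (by linarith)]
    linarith
  have hlarge : ∀ l, B ≤ l → 0 < (N l).det := by
    intro l hl
    have hl1 : 1 ≤ l := hB1.trans hl
    have hl0 : 0 ≤ l := by linarith
    refine lt_of_lt_of_le (poly_pos hk0 hk1 hl) ?_
    rw [hdet]
    have hprod : (l - 1) ^ 3 ≤ (l - ζ₁) * (l - ζ₂) * (l - ζ₃) := by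
      have e : (l - 1) ^ 3 = (l - 1) * (l - 1) * (l - 1) := by ring
      have p : 0 ≤ l - 1 := by linarith
      have p₁ : l - 1 ≤ l - ζ₁ := by linarith
      have p₂ : l - 1 ≤ l - ζ₂ := by linarith
      have p₃ : l - 1 ≤ l - ζ₃ := by linarith
      rw [e]
      exact mul_le_mul (mul_le_mul p₁ p₂ p (p.trans p₁)) p₃ p
        (mul_nonneg (p.trans p₁) (p.trans p₂))
    have hcube : ∀ z : ℝ, -1 ≤ z → l ^ 3 - z ^ 3 ≤ (l + 1) ^ 3 := by
      intro z hz
      have : -1 ≤ z ^ 3 := by nlinarith [sq_nonneg (2 * z - 1)]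
      nlinarith [sq_nonneg l]
    have c₁ := mul_le_mul_of_nonneg_right (hcube _ b₁.1) (sq_nonneg δ₁)
    have c₂ := mul_le_mul_of_nonneg_right (hcube _ b₂.1) (sq_nonneg δ₂)
    have c₃ := mul_le_mul_of_nonneg_right (hcube _ b₃.1) (sq_nonneg δ₃)
    have hs : Real.sqrt (l ^ 2 + l * ζ₁ + ζ₁ ^ 2) * (Real.sqrt (l ^ 2 + l * ζ₂ + ζ₂ ^ 2) *
        Real.sqrt (l ^ 2 + l * ζ₃ + ζ₃ ^ 2)) ≤ (l + 1) * ((l + 1) * (l + 1)) := by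
      gcongr
      · exact sqrt_quad_le hl0 b₁.1 b₁.2
      · exact sqrt_quad_le hl0 b₂.1 b₂.2
      · exact sqrt_quad_le hl0 b₃.1 b₃.2
    have hs' := mul_le_mul_of_nonneg_left hs (show 0 ≤ 2 * δ₁ * δ₂ * δ₃ by positivity)
    rw [hk]
    linarith
  -- Any point of nonpositive determinant has a root at or above it, as the determinant is
  -- positive from `B` on; this yields both `M ≤ Λ'` and positivity beyond `Λ'`.
  have hroot : ∀ l, (N l).det ≤ 0 → ∃ r, l ≤ r ∧ (N r).det = 0 := by
    intro l hl
    have hlB : l ≤ B := by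
      by_contra h
      exact absurd (hlarge l (not_le.mp h).le) (not_lt.mpr hl)
    obtain ⟨r, hr, hr0⟩ := intermediate_value_Icc hlB hcont.continuousOn
      ⟨hl, (hlarge B le_rfl).le⟩
    exact ⟨r, hr.1, hr0⟩
  obtain ⟨r, hMr, hr0⟩ := hroot M hM0
  have hbdd : BddAbove {l : ℝ | (N l).det = 0} := by
    refine ⟨B, fun l hl => ?_⟩
    by_contra h
    exact (hlarge l (not_le.mp h).le).ne' hl
  have hclosed : IsClosed {l : ℝ | (N l).det = 0} := isClosed_eq hcont continuous_const
  have hG := hclosed.isGreatest_csSup ⟨r, hr0⟩ hbdd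
  have hMG := hMr.trans (hG.2 hr0)
  refine ⟨_, hG, hMG, fun l hl => ?_⟩
  have hpos : 0 < (N l).det := by
    by_contra h
    obtain ⟨s, hls, hs0⟩ := hroot l (not_lt.mp h)
    exact absurd (hG.2 hs0) (not_le.mpr (hl.trans_le hls))
  have hMl := hMG.trans_lt hl
  rw [hN] at hpos ⊢
  exact posDef_of_det_pos (by linarith) (by linarith) (by linarith)
    (by positivity) (by positivity) (by positivity) hpos
end
end

section
/- Fix α ∈ ℝ and real numbers δ₁, δ₂, δ₃ ≥ 0 with δ₁ ≤ 1/2 and δ₂² + δ₃² < 1/2, and let Λ' be the largest real root of (λ−ζ₁)(λ−ζ₂)(λ−ζ₃) − Σ_{j=1}^{3}(λ³−ζ_j³)δ_j² − 2δ₁δ₂δ₃√((λ²+λζ₁+ζ₁²)(λ²+λζ₂+ζ₂²)(λ²+λζ₃+ζ₃²)) = 0. For λ > 0 and φ = (φ₁, φ₂, φ₃) ∈ ℝ³, let M(λ, φ) be the real symmetric 3×3 matrix with diagonal entries λ−ζ₁, λ−ζ₂, λ−ζ₃, and off-diagonal entries M₂₃ = M₃₂ = (λ cos φ₁ + ζ₁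 cos(φ₁ − π/3))δ₁, M₁₃ = M₃₁ = (λ cos φ₂ + ζ₂ cos(φ₂ − π/3))δ₂, M₁₂ = M₂₁ = (λ cos φ₃ + ζ₃ cos(φ₃ − π/3))δ₃. Then M(λ, φ) is positive definite for every λ > Λ' and every φ ∈ ℝ³. -/
/-!
Write `F` for the left-hand side of the equation (`charFun` below), `a_j = λ - ζ_j`,
`q_j = λ² + λζ_j + ζ_j²` and `c_j = δ_j √q_j`. Since `λ³ - ζ_j³ = a_j q_j`, the value `F λ` is
the determinant `a₁a₂a₃ - ∑ a_j c_j² - 2c₁c₂c₃` of the symmetric matrix with diagonal `a_j` and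
off-diagonal entries `-c_j`. The off-diagonal entries of `M(λ, φ)` are bounded in absolute value
by the `c_j`, because `(λ cos φ + ζ cos(φ - π/3))² + (λ sin φ + ζ sin(φ - π/3))² = λ² + λζ + ζ²`.
So if all `a_j > 0` and `F λ > 0`, the leading principal minors of `M(λ, φ)` are at least the
corresponding positive minors of the comparison matrix, and `M(λ, φ)` is positive definite
(`posDef_of_abs_le`).

It remains to see that `λ > Λ'` forces `F λ > 0` and `λ > ζ_j`. The hypotheses on the `δ_j` make
the leading coefficient `1 - ∑ δ_j² - 2δ₁δ₂δ₃` of `F` positive, so `F > 0` far to the right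
(`exists_charFun_pos`), and the intermediate value theorem yields `t ≤ Λ'` whenever `F t ≤ 0`.
This applies to `t = λ`, and also to `t = max ζ_j`, where `F ≤ 0` because every term is.
-/

noncomputable section

/-- The function whose largest real root is `Λ'`. -/
def charFun (ζ₁ ζ₂ ζ₃ δ₁ δ₂ δ₃ lam : ℝ) : ℝ :=
  (lam - ζ₁) * (lam - ζ₂) * (lam - ζ₃) -
    ((lam ^ 3 - ζ₁ ^ 3) * δ₁ ^ 2 + (lam ^ 3 - ζ₂ ^ 3) * δ₂ ^ 2 +
      (lam ^ 3 - ζ₃ ^ 3) * δ₃ ^ 2) -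
    2 * δ₁ * δ₂ * δ₃ * Real.sqrt ((lam ^ 2 + lam * ζ₁ + ζ₁ ^ 2) *
      ((lam ^ 2 + lam * ζ₂ + ζ₂ ^ 2) * (lam ^ 2 + lam * ζ₃ + ζ₃ ^ 2)))

lemma abs_offDiag_le (x z φ δ : ℝ) (hδ : 0 ≤ δ) :
    |(x * Real.cos φ + z * Real.cos (φ - Real.pi / 3)) * δ| ≤
      δ * Real.sqrt (x ^ 2 + x * z + z ^ 2) := by
  rw [abs_mul, abs_of_nonneg hδ, mul_comm]
  refine mul_le_mul_of_nonneg_left (Real.abs_le_sqrt ?_) hδ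
  have e1 := Real.sin_sq_add_cos_sq φ
  have e2 := Real.sin_sq_add_cos_sq (φ - Real.pi / 3)
  have e3 : Real.cos φ * Real.cos (φ - Real.pi / 3)
      + Real.sin φ * Real.sin (φ - Real.pi / 3) = 1 / 2 := by
    rw [← Real.cos_sub, sub_sub_cancel, Real.cos_pi_div_three]
  have key : x ^ 2 + x * z + z ^ 2 - (x * Real.cos φ + z * Real.cos (φ - Real.pi / 3)) ^ 2
      = (x * Real.sin φ + z * Real.sin (φ - Real.pi / 3)) ^ 2 := by
    linear_combination (-x ^ 2) * e1 - z ^ 2 * e2 - 2 * x * z * e3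
  linarith [sq_nonneg (x * Real.sin φ + z * Real.sin (φ - Real.pi / 3))]

/-- Sylvester's criterion for real symmetric `3 × 3` matrices, by completing squares. -/
lemma posDef_three {a₁ a₂ a₃ b₁ b₂ b₃ : ℝ} (ha : 0 < a₁) (hm : 0 < a₁ * a₂ - b₃ ^ 2)
    (hd : 0 < a₁ * a₂ * a₃ - a₁ * b₁ ^ 2 - a₂ * b₂ ^ 2 - a₃ * b₃ ^ 2 + 2 * b₁ * b₂ * b₃) :
    (!![a₁, b₃, b₂; b₃, a₂, b₁; b₂, b₁, a₃]).PosDef := by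
  refine Matrix.PosDef.of_dotProduct_mulVec_pos ?_ ?_
  · ext i j
    fin_cases i <;> fin_cases j <;> rfl
  · intro v hv
    set m := a₁ * a₂ - b₃ ^ 2 with hm_def
    set d := a₁ * a₂ * a₃ - a₁ * b₁ ^ 2 - a₂ * b₂ ^ 2 - a₃ * b₃ ^ 2 + 2 * b₁ * b₂ * b₃ with hd_def
    set x := v 0 with hx
    set y := v 1 with hy
    set z := v 2 with hz
    have hQ : star v ⬝ᵥ (!![a₁, b₃, b₂; b₃, a₂, b₁; b₂, b₁, a₃]).mulVec v =
        a₁ * x ^ 2 + a₂ * y ^ 2 + a₃ * z ^ 2 + 2 * b₃ * x * y + 2 * b₂ * x * z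
          + 2 * b₁ * y * z := by
      simp [dotProduct, Matrix.mulVec, Fin.sum_univ_three]
      ring
    rw [hQ]
    have hsq : a₁ * m * (a₁ * x ^ 2 + a₂ * y ^ 2 + a₃ * z ^ 2 + 2 * b₃ * x * y + 2 * b₂ * x * z
          + 2 * b₁ * y * z) = m * (a₁ * x + b₃ * y + b₂ * z) ^ 2
          + (m * y + (a₁ * b₁ - b₂ * b₃) * z) ^ 2 + a₁ * d * z ^ 2 := by
      rw [hm_def, hd_def]; ring
    have ham : 0 < a₁ * m := mul_pos ha hm
    refine pos_of_mul_pos_right ?_ ham.le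
    rw [hsq]
    have n1 : 0 ≤ m * (a₁ * x + b₃ * y + b₂ * z) ^ 2 := by positivity
    have n2 : 0 ≤ (m * y + (a₁ * b₁ - b₂ * b₃) * z) ^ 2 := by positivity
    by_cases hz0 : z = 0
    · by_cases hy0 : y = 0
      · have hx0 : x ≠ 0 := by
          intro hx0
          apply hv
          ext i
          fin_cases i
          · exact hx0
          · exact hy0
          · exact hz0
        rw [hz0, hy0]
        simp only [mul_zero, add_zero]
        positivity
      · rw [hz0] at n1 ⊢
        have : 0 < (m * y + (a₁ * b₁ - b₂ * b₃) * 0) ^ 2 := by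
          rw [mul_zero, add_zero]; positivity
        nlinarith
    · have : 0 < a₁ * d * z ^ 2 := by positivity
      linarith

/-- If the symmetric matrix with diagonal `a_j > 0` and off-diagonal entries `-c_j ≤ 0` has
positive determinant, then every symmetric matrix with the same diagonal and off-diagonal entries
bounded by the `c_j` is positive definite. -/
lemma posDef_of_abs_le {a₁ a₂ a₃ b₁ b₂ b₃ c₁ c₂ c₃ : ℝ} (ha₁ : 0 < a₁) (ha₂ : 0 < a₂)
    (ha₃ : 0 < a₃) (hb₁ : |b₁| ≤ c₁) (hb₂ : |b₂| ≤ c₂) (hb₃ : |b₃| ≤ c₃)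
    (hd : 0 < a₁ * a₂ * a₃ - a₁ * c₁ ^ 2 - a₂ * c₂ ^ 2 - a₃ * c₃ ^ 2 - 2 * c₁ * c₂ * c₃) :
    (!![a₁, b₃, b₂; b₃, a₂, b₁; b₂, b₁, a₃]).PosDef := by
  have hc₁ : 0 ≤ c₁ := (abs_nonneg _).trans hb₁
  have hc₂ : 0 ≤ c₂ := (abs_nonneg _).trans hb₂
  have hc₃ : 0 ≤ c₃ := (abs_nonneg _).trans hb₃
  have s₁ : b₁ ^ 2 ≤ c₁ ^ 2 := sq_le_sq' (abs_le.mp hb₁).1 (abs_le.mp hb₁).2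
  have s₂ : b₂ ^ 2 ≤ c₂ ^ 2 := sq_le_sq' (abs_le.mp hb₂).1 (abs_le.mp hb₂).2
  have s₃ : b₃ ^ 2 ≤ c₃ ^ 2 := sq_le_sq' (abs_le.mp hb₃).1 (abs_le.mp hb₃).2
  have hprod : -(c₁ * c₂ * c₃) ≤ b₁ * b₂ * b₃ := by
    have : |b₁ * b₂ * b₃| ≤ c₁ * c₂ * c₃ := by
      rw [abs_mul, abs_mul]; gcongr
    exact (abs_le.mp this).1
  have t₁ := mul_le_mul_of_nonneg_left s₁ ha₁.le
  have t₂ := mul_le_mul_of_nonneg_left s₂ ha₂.le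
  have t₃ := mul_le_mul_of_nonneg_left s₃ ha₃.le
  have hm : 0 < a₁ * a₂ - c₃ ^ 2 := by
    refine pos_of_mul_pos_right (a := a₃) ?_ ha₃.le
    have : 0 ≤ a₁ * c₁ ^ 2 + a₂ * c₂ ^ 2 + 2 * c₁ * c₂ * c₃ := by positivity
    linarith
  exact posDef_three ha₁ (by linarith) (by linarith)

lemma continuous_charFun (ζ₁ ζ₂ ζ₃ δ₁ δ₂ δ₃ : ℝ) :
    Continuous (charFun ζ₁ ζ₂ ζ₃ δ₁ δ₂ δ₃) := by
  unfold charFun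
  fun_prop

lemma quad_le {x z : ℝ} (hx : 0 ≤ x) (hz : |z| ≤ 1) : x ^ 2 + x * z + z ^ 2 ≤ (x + 1) ^ 2 := by
  obtain ⟨hl, hu⟩ := abs_le.mp hz
  nlinarith [mul_le_mul_of_nonneg_left hu hx]

lemma cube_sub_le {x z : ℝ} (hx : 0 ≤ x) (hz : |z| ≤ 1) : x ^ 3 - z ^ 3 ≤ (x + 1) ^ 3 := by
  have h : (-1) ^ 3 ≤ z ^ 3 := (Odd.strictMono_pow (by decide : Odd 3)).monotone (abs_le.mp hz).1
  nlinarith [sq_nonneg x]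

lemma exists_charFun_pos {ζ₁ ζ₂ ζ₃ δ₁ δ₂ δ₃ : ℝ} (hζ₁ : |ζ₁| ≤ 1) (hζ₂ : |ζ₂| ≤ 1)
    (hζ₃ : |ζ₃| ≤ 1) (h₁ : 0 ≤ δ₁) (h₂ : 0 ≤ δ₂) (h₃ : 0 ≤ δ₃)
    (hδ₁ : δ₁ ≤ 1 / 2) (hδ : δ₂ ^ 2 + δ₃ ^ 2 < 1 / 2) (t : ℝ) :
    ∃ L, t ≤ L ∧ 0 < charFun ζ₁ ζ₂ ζ₃ δ₁ δ₂ δ₃ L := by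
  obtain ⟨ε, hε⟩ : ∃ ε, ε = 1 - (δ₁ ^ 2 + δ₂ ^ 2 + δ₃ ^ 2 + 2 * δ₁ * δ₂ * δ₃) := ⟨_, rfl⟩
  have hε0 : 0 < ε := by
    have e1 : δ₁ ^ 2 ≤ 1 / 4 := by nlinarith
    have e2 : δ₁ * (2 * δ₂ * δ₃) ≤ 1 / 2 * (2 * δ₂ * δ₃) := by gcongr
    nlinarith [sq_nonneg (δ₂ - δ₃)]
  obtain ⟨L, hL⟩ : ∃ L, L = max t (max 1 (6 / ε)) := ⟨_, rfl⟩
  have hLt : t ≤ L := hL ▸ le_max_left _ _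
  have hL1 : 1 ≤ L := hL ▸ (le_max_left _ _).trans (le_max_right _ _)
  have hLε : 6 / ε ≤ L := hL ▸ (le_max_right _ _).trans (le_max_right _ _)
  have hL0 : 0 ≤ L := by linarith
  refine ⟨L, hLt, ?_⟩
  have hεL : 6 ≤ ε * L := by rw [div_le_iff₀ hε0] at hLε; linarith
  have hprod : (L - 1) ^ 3 ≤ (L - ζ₁) * (L - ζ₂) * (L - ζ₃) := by
    have u₁ : L - 1 ≤ L - ζ₁ := by linarith [(abs_le.mp hζ₁).2]
    have u₂ : L - 1 ≤ L - ζ₂ := by linarith [(abs_le.mp hζ₂).2]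
    have u₃ : L - 1 ≤ L - ζ₃ := by linarith [(abs_le.mp hζ₃).2]
    have u : 0 ≤ L - 1 := by linarith
    calc (L - 1) ^ 3 = (L - 1) * (L - 1) * (L - 1) := by ring
      _ ≤ _ := mul_le_mul (mul_le_mul u₁ u₂ u (u.trans u₁)) u₃ u
        (mul_nonneg (u.trans u₁) (u.trans u₂))
  have hsqrt : Real.sqrt ((L ^ 2 + L * ζ₁ + ζ₁ ^ 2) *
      ((L ^ 2 + L * ζ₂ + ζ₂ ^ 2) * (L ^ 2 + L * ζ₃ + ζ₃ ^ 2))) ≤ (L + 1) ^ 3 := by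
    refine Real.sqrt_le_iff.mpr ⟨by positivity, ?_⟩
    calc _ ≤ (L + 1) ^ 2 * ((L + 1) ^ 2 * (L + 1) ^ 2) :=
          mul_le_mul (quad_le hL0 hζ₁)
            (mul_le_mul (quad_le hL0 hζ₂) (quad_le hL0 hζ₃) (quad_nonneg _ _) (by positivity))
            (mul_nonneg (quad_nonneg _ _) (quad_nonneg _ _)) (by positivity)
      _ = _ := by ring
  have k₁ := mul_le_mul_of_nonneg_right (cube_sub_le hL0 hζ₁) (sq_nonneg δ₁)
  have k₂ := mul_le_mul_of_nonneg_right (cube_sub_le hL0 hζ₂) (sq_nonneg δ₂)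
  have k₃ := mul_le_mul_of_nonneg_right (cube_sub_le hL0 hζ₃) (sq_nonneg δ₃)
  have k₄ := mul_le_mul_of_nonneg_left hsqrt (by positivity : 0 ≤ 2 * δ₁ * δ₂ * δ₃)
  -- The lower bound `(L - 1)³ - (1 - ε)(L + 1)³` equals `ε (L + 1)³ - (6 L² + 2)`.
  have hbig : 0 < (L - 1) ^ 3 - (1 - ε) * (L + 1) ^ 3 := by
    have : 6 * (L + 1) ^ 2 ≤ ε * (L + 1) * (L + 1) ^ 2 := by
      gcongr
      linarith
    nlinarith
  have hcoef : (1 - ε) * (L + 1) ^ 3 = (L + 1) ^ 3 * δ₁ ^ 2 + (L + 1) ^ 3 * δ₂ ^ 2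
      + (L + 1) ^ 3 * δ₃ ^ 2 + 2 * δ₁ * δ₂ * δ₃ * (L + 1) ^ 3 := by
    rw [hε]; ring
  unfold charFun
  linarith

/-- At the largest of the `ζ_j` the product vanishes and the remaining terms are nonpositive. -/
lemma charFun_nonpos {ζ₁ ζ₂ ζ₃ δ₁ δ₂ δ₃ t : ℝ} (h₁ : 0 ≤ δ₁) (h₂ : 0 ≤ δ₂) (h₃ : 0 ≤ δ₃)
    (ht₁ : ζ₁ ≤ t) (ht₂ : ζ₂ ≤ t) (ht₃ : ζ₃ ≤ t)
    (h0 : (t - ζ₁) * (t - ζ₂) * (t - ζ₃) = 0) : charFun ζ₁ ζ₂ ζ₃ δ₁ δ₂ δ₃ t ≤ 0 := by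
  have mono : Monotone fun x : ℝ => x ^ 3 := (Odd.strictMono_pow (by decide : Odd 3)).monotone
  have k₁ := mul_nonneg (sub_nonneg.mpr (mono ht₁)) (sq_nonneg δ₁)
  have k₂ := mul_nonneg (sub_nonneg.mpr (mono ht₂)) (sq_nonneg δ₂)
  have k₃ := mul_nonneg (sub_nonneg.mpr (mono ht₃)) (sq_nonneg δ₃)
  have k₄ : 0 ≤ 2 * δ₁ * δ₂ * δ₃ * Real.sqrt ((t ^ 2 + t * ζ₁ + ζ₁ ^ 2) *
      ((t ^ 2 + t * ζ₂ + ζ₂ ^ 2) * (t ^ 2 + t * ζ₃ + ζ₃ ^ 2))) := by positivity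
  unfold charFun
  simp only at k₁ k₂ k₃
  linarith

/-- With `ζ_j` the roots of `4ζ³ − 3ζ = cos 3α`, `0 ≤ δ₁, δ₂, δ₃`,
`δ₁ ≤ 1/2`, `δ₂² + δ₃² < 1/2`, and `Λ'` the largest real root of the stated equation,
the matrix `M(λ, φ)` is positive definite for every `λ > Λ'` and every `φ ∈ ℝ³`. -/
theorem matrixM_posDef_above_largest_root
    (α : ℝ) (ζ₁ ζ₂ ζ₃ : ℝ)
    (hζ₁ : ζ₁ = Real.cos α) (hζ₂ : ζ₂ = Real.cos (α + 2 * Real.pi / 3))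
    (hζ₃ : ζ₃ = Real.cos (α - 2 * Real.pi / 3))
    (δ₁ δ₂ δ₃ : ℝ) (h₁ : 0 ≤ δ₁) (h₂ : 0 ≤ δ₂) (h₃ : 0 ≤ δ₃)
    (hδ₁ : δ₁ ≤ 1 / 2) (hδ : δ₂ ^ 2 + δ₃ ^ 2 < 1 / 2)
    (Λ' : ℝ)
    (hΛ' : IsGreatest {lam : ℝ |
      (lam - ζ₁) * (lam - ζ₂) * (lam - ζ₃) -
        ((lam ^ 3 - ζ₁ ^ 3) * δ₁ ^ 2 + (lam ^ 3 - ζ₂ ^ 3) * δ₂ ^ 2 +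
          (lam ^ 3 - ζ₃ ^ 3) * δ₃ ^ 2) -
        2 * δ₁ * δ₂ * δ₃ * Real.sqrt ((lam ^ 2 + lam * ζ₁ + ζ₁ ^ 2) *
          ((lam ^ 2 + lam * ζ₂ + ζ₂ ^ 2) * (lam ^ 2 + lam * ζ₃ + ζ₃ ^ 2))) = 0} Λ') :
    ∀ lam : ℝ, Λ' < lam → ∀ φ₁ φ₂ φ₃ : ℝ,
      (!![lam - ζ₁, (lam * Real.cos φ₃ + ζ₃ * Real.cos (φ₃ - Real.pi / 3)) * δ₃,
            (lam * Real.cos φ₂ + ζ₂ * Real.cos (φ₂ - Real.pi / 3)) * δ₂;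
          (lam * Real.cos φ₃ + ζ₃ * Real.cos (φ₃ - Real.pi / 3)) * δ₃, lam - ζ₂,
            (lam * Real.cos φ₁ + ζ₁ * Real.cos (φ₁ - Real.pi / 3)) * δ₁;
          (lam * Real.cos φ₂ + ζ₂ * Real.cos (φ₂ - Real.pi / 3)) * δ₂,
            (lam * Real.cos φ₁ + ζ₁ * Real.cos (φ₁ - Real.pi / 3)) * δ₁,
            lam - ζ₃]).PosDef := by
  intro lam hlam φ₁ φ₂ φ₃
  have b₁ : |ζ₁| ≤ 1 := hζ₁ ▸ Real.abs_cos_le_one _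
  have b₂ : |ζ₂| ≤ 1 := hζ₂ ▸ Real.abs_cos_le_one _
  have b₃ : |ζ₃| ≤ 1 := hζ₃ ▸ Real.abs_cos_le_one _
  have le_of_nonpos : ∀ t, charFun ζ₁ ζ₂ ζ₃ δ₁ δ₂ δ₃ t ≤ 0 → t ≤ Λ' := by
    intro t ht
    obtain ⟨L, htL, hL⟩ := exists_charFun_pos b₁ b₂ b₃ h₁ h₂ h₃ hδ₁ hδ t
    obtain ⟨s, hs, hs0⟩ := intermediate_value_Icc htL
      (continuous_charFun ζ₁ ζ₂ ζ₃ δ₁ δ₂ δ₃).continuousOn ⟨ht, hL.le⟩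
    exact hs.1.trans (hΛ'.2 hs0)
  have hF : 0 < charFun ζ₁ ζ₂ ζ₃ δ₁ δ₂ δ₃ lam := by
    by_contra! h
    exact absurd (le_of_nonpos lam h) (not_le.mpr hlam)
  have hmax : max ζ₁ (max ζ₂ ζ₃) < lam := by
    refine (le_of_nonpos _ (charFun_nonpos h₁ h₂ h₃ (le_max_left _ _)
      ((le_max_left _ _).trans (le_max_right _ _))
      ((le_max_right _ _).trans (le_max_right _ _)) ?_)).trans_lt hlam
    rcases max_choice ζ₁ (max ζ₂ ζ₃) with h | h
    · rw [h]; ring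
    · rcases max_choice ζ₂ ζ₃ with h' | h' <;> rw [h, h'] <;> ring
  obtain ⟨l₁, l₂, l₃⟩ : ζ₁ < lam ∧ ζ₂ < lam ∧ ζ₃ < lam := by simpa using hmax
  refine posDef_of_abs_le (sub_pos.mpr l₁) (sub_pos.mpr l₂) (sub_pos.mpr l₃)
    (abs_offDiag_le lam ζ₁ φ₁ δ₁ h₁) (abs_offDiag_le lam ζ₂ φ₂ δ₂ h₂)
    (abs_offDiag_le lam ζ₃ φ₃ δ₃ h₃) ?_
  unfold charFun at hF
  rw [Real.sqrt_mul (quad_nonneg _ _), Real.sqrt_mul (quad_nonneg _ _)] at hF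
  rw [mul_pow, mul_pow, mul_pow, Real.sq_sqrt (quad_nonneg _ _), Real.sq_sqrt (quad_nonneg _ _),
    Real.sq_sqrt (quad_nonneg _ _)]
  refine hF.trans_eq ?_
  ring
end
end
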